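/- Let G = (V,E) be a finite simple graph with |V| = n ≥ 2 and let y: V → ℝ be a mapping such that ∑_{(i,j)∈V×V} |y(i) − y(j)| > 0 and n·∑_{{i,j}∈E} |y(i) − y(j)| ≤ δ₀·∑_{(i,j)∈V×V} |y(i) − y(j)|, where the first sum is over the edges of G and the double sum ranges over all ordered pairs of vertices. Then there exists a threshold t ∈ ℝ such that the set W = {i ∈ V : y(i) ≤ t} satisfies ∅ ⊊ W ⊊ V and φ(W) ≤ 2·δ₀. -/

import Mathlib

open Finset
open scoped Classical

noncomputable section

variable {V : Type*}

/-- The degree of vertex `v` in the graph `H`. -/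
def hdeg [Fintype V] (H : SimpleGraph V) (v : V) : ℕ :=
  (Finset.univ.filter fun w => H.Adj v w).card

/-- `H` has spectral gap at least `lam`: for every `X : V → ℝ` with
`∑ v, deg v * X v = 0`, the sum over edges of `(X i - X j)^2` (written as half the
sum over ordered adjacent pairs) is at least `lam * ∑ v, deg v * (X v)^2`. -/
def HasGap [Fintype V] (H : SimpleGraph V) (lam : ℝ) : Prop :=
  ∀ X : V → ℝ, ∑ v, (hdeg H v : ℝ) * X v = 0 →
    (1 / 2) * ∑ i, ∑ j, (if H.Adj i j then (X i - X j) ^ 2 else 0) ≥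
      lam * ∑ v, (hdeg H v : ℝ) * X v ^ 2

/-- The number of edges of `G` with exactly one endpoint in `S`. -/
def edgeCut [Fintype V] (G : SimpleGraph V) (S : Finset V) : ℕ :=
  ((Finset.univ : Finset (V × V)).filter fun p => p.1 ∈ S ∧ p.2 ∉ S ∧ G.Adj p.1 p.2).card

/-- Edge expansion `φ(S) = |E(S, V∖S)| * n / (|S| * |V∖S|)`. -/
def edgeExp [Fintype V] [DecidableEq V] (G : SimpleGraph V) (S : Finset V) : ℝ :=
  (edgeCut G S : ℝ) * (Fintype.card V : ℝ) / ((S.card : ℝ) * ((Sᶜ : Finset V).card : ℝ))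

/-- **Lemma (ℓ₁-line embedding, edge expansion).**
If `y : V → ℝ` satisfies `n · ∑_{{i,j} ∈ E} |y i - y j| ≤ δ₀ · ∑_{(i,j)} |y i - y j|`
with the denominator positive, then some threshold set `W = {i : y i ≤ t}` is a
nontrivial cut with `φ(W) ≤ 2 δ₀`. (The sum over edges is written as half the sum over
ordered adjacent pairs.) -/
theorem line_embedding_edge {V : Type*} [Fintype V] [DecidableEq V] (G : SimpleGraph V)
    (hn : 2 ≤ Fintype.card V) (y : V → ℝ) (δ₀ : ℝ)
    (hpos : 0 < ∑ i, ∑ j, |y i - y j|)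
    (hbound : (Fintype.card V : ℝ) *
        ((1 / 2) * ∑ i, ∑ j, (if G.Adj i j then |y i - y j| else 0)) ≤
      δ₀ * ∑ i, ∑ j, |y i - y j|) :
    ∃ t : ℝ, (Finset.univ.filter fun i => y i ≤ t).Nonempty ∧
      (Finset.univ.filter fun i => y i ≤ t) ≠ Finset.univ ∧
      edgeExp G (Finset.univ.filter fun i => y i ≤ t) ≤ 2 * δ₀ := by
  by_contra hcon
  push Not at hcon
  set n : ℝ := (Fintype.card V : ℝ) with hndef
  let w : V → V → ℝ := fun i j => n * (if G.Adj i j then 1 else 0) - 2 * δ₀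
  let F : ℝ → ℝ := fun t => ∑ i, ∑ j, w i j * (Set.Ico (y i) (y j)).indicator (fun _ => (1 : ℝ)) t
  have hterm : ∀ i j, MeasureTheory.Integrable
      (fun t => w i j * (Set.Ico (y i) (y j)).indicator (fun _ => (1 : ℝ)) t) := by
    intro i j
    apply MeasureTheory.Integrable.const_mul
    rw [MeasureTheory.integrable_indicator_iff measurableSet_Ico]
    exact MeasureTheory.integrableOn_const (by simp)
  have hFint : MeasureTheory.Integrable F :=
    MeasureTheory.integrable_finsetSum _ fun i _ =>
      MeasureTheory.integrable_finsetSum _ fun j _ => hterm i j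
  have hI : ∫ t, F t = ∑ i, ∑ j, w i j * max (y j - y i) 0 := by
    rw [MeasureTheory.integral_finsetSum _ fun i _ =>
      MeasureTheory.integrable_finsetSum _ fun j _ => hterm i j]
    refine Finset.sum_congr rfl fun i _ => ?_
    rw [MeasureTheory.integral_finsetSum _ fun j _ => hterm i j]
    refine Finset.sum_congr rfl fun j _ => ?_
    rw [MeasureTheory.integral_const_mul, MeasureTheory.integral_indicator_const _ measurableSet_Ico]
    simp [MeasureTheory.measureReal_def, ENNReal.toReal_ofReal']
  have hsymm : ∑ i, ∑ j, w i j * max (y j - y i) 0 = ∑ i, ∑ j, w i j * max (y i - y j) 0 := by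
    rw [Finset.sum_comm]
    refine Finset.sum_congr rfl fun i _ => Finset.sum_congr rfl fun j _ => ?_
    simp only [w, G.adj_comm]
  have hadd : ∑ i, ∑ j, w i j * max (y j - y i) 0 + ∑ i, ∑ j, w i j * max (y i - y j) 0
      = ∑ i, ∑ j, w i j * |y i - y j| := by
    simp only [← Finset.sum_add_distrib]
    refine Finset.sum_congr rfl fun i _ => Finset.sum_congr rfl fun j _ => ?_
    rw [← mul_add]
    congr 1
    rcases le_total (y i) (y j) with h | h
    · rw [max_eq_left (by linarith), max_eq_right (by linarith), abs_of_nonpos (by linarith)]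
      ring
    · rw [max_eq_right (by linarith), max_eq_left (by linarith), abs_of_nonneg (by linarith)]
      ring
  have hw : ∑ i, ∑ j, w i j * |y i - y j| =
      n * (∑ i, ∑ j, (if G.Adj i j then |y i - y j| else 0)) -
        2 * δ₀ * ∑ i, ∑ j, |y i - y j| := by
    simp only [Finset.mul_sum, ← Finset.sum_sub_distrib]
    refine Finset.sum_congr rfl fun i _ => Finset.sum_congr rfl fun j _ => ?_
    simp only [w]
    split_ifs <;> ring
  have hle : ∫ t, F t ≤ 0 := by linarith
  -- pointwise formula for `F`
  have hF : ∀ t, F t = n * (edgeCut G (Finset.univ.filter fun i => y i ≤ t) : ℝ) -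
      2 * δ₀ * (((Finset.univ.filter fun i => y i ≤ t).card : ℝ) *
        (((Finset.univ.filter fun i => y i ≤ t)ᶜ : Finset V).card : ℝ)) := by
    intro t
    have h1 : (edgeCut G (Finset.univ.filter fun i => y i ≤ t) : ℝ) =
        ∑ i, ∑ j, if (y i ≤ t ∧ t < y j ∧ G.Adj i j) then (1 : ℝ) else 0 := by
      unfold edgeCut
      rw [Finset.card_filter, Nat.cast_sum, Fintype.sum_prod_type]
      simp
    have h2 : ((Finset.univ.filter fun i => y i ≤ t).card : ℝ) =
        ∑ i, if y i ≤ t then (1 : ℝ) else 0 := by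
      simp
    have h3 : ((((Finset.univ.filter fun i => y i ≤ t)ᶜ : Finset V).card : ℕ) : ℝ) =
        ∑ i, if t < y i then (1 : ℝ) else 0 := by
      rw [Finset.compl_filter]
      simp
    rw [h1, h2, h3, Finset.sum_mul_sum]
    simp only [Finset.mul_sum, ← Finset.sum_sub_distrib, F]
    refine Finset.sum_congr rfl fun i _ => Finset.sum_congr rfl fun j _ => ?_
    simp only [w, Set.indicator_apply, Set.mem_Ico]
    by_cases a : y i ≤ t <;> by_cases b : t < y j <;> by_cases c : G.Adj i j <;> simp [a, b, c]
  have hFpos : ∀ t, (Finset.univ.filter fun i => y i ≤ t).Nonempty →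
      (Finset.univ.filter fun i => y i ≤ t) ≠ Finset.univ → 0 < F t := by
    intro t h1 h2
    have h := hcon t h1 h2
    have p1 : (0 : ℝ) < ((Finset.univ.filter fun i => y i ≤ t).card : ℝ) := by
      exact_mod_cast h1.card_pos
    have p2 : (0 : ℝ) < (((Finset.univ.filter fun i => y i ≤ t)ᶜ : Finset V).card : ℝ) := by
      have : ((Finset.univ.filter fun i => y i ≤ t)ᶜ : Finset V).Nonempty := by
        rw [Finset.nonempty_iff_ne_empty]
        intro h
        exact h2 (Finset.compl_eq_empty_iff _ |>.1 h)
      exact_mod_cast this.card_pos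
    unfold edgeExp at h
    rw [lt_div_iff₀ (mul_pos p1 p2)] at h
    rw [hF t]
    linarith
  have hFnn : ∀ t, 0 ≤ F t := by
    intro t
    by_cases h1 : (Finset.univ.filter fun i => y i ≤ t).Nonempty
    · by_cases h2 : (Finset.univ.filter fun i => y i ≤ t) = Finset.univ
      · rw [hF t, h2]
        simp [edgeCut]
      · exact (hFpos t h1 h2).le
    · rw [Finset.not_nonempty_iff_eq_empty] at h1
      rw [hF t, h1]
      simp [edgeCut]
  obtain ⟨a, b, hab⟩ : ∃ a b, y a < y b := by
    by_contra hno
    push Not at hno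
    have : ∑ i, ∑ j, |y i - y j| = 0 := by
      refine Finset.sum_eq_zero fun i _ => Finset.sum_eq_zero fun j _ => ?_
      rw [le_antisymm (hno j i) (hno i j)]
      simp
    linarith
  have hsub : Set.Ico (y a) (y b) ⊆ Function.support F := by
    intro t ht
    refine (hFpos t ⟨a, by simpa using ht.1⟩ ?_).ne'
    intro h
    have : b ∈ (Finset.univ.filter fun i => y i ≤ t) := by rw [h]; simp
    simp only [Finset.mem_filter, Finset.mem_univ, true_and] at this
    exact absurd ht.2 (not_lt.2 this)
  have hgt : 0 < ∫ t, F t := by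
    rw [MeasureTheory.integral_pos_iff_support_of_nonneg hFnn hFint]
    refine lt_of_lt_of_le ?_ (MeasureTheory.measure_mono hsub)
    simpa using hab
  linarith
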